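/- (Main correctness lemma of the polynomial-multiplication algorithm, utilitarian case.) Fix m, k ≥ 1, τ ≥ 1, a target quality η : ℕ, and a committee scoring function β : Finset (Fin m) → ℕ, and let p[s,j,ℓ] be the recursively defined polynomials described in the context. Then p[k*τ, τ, η] ≠ 0 if and only if there exists a Finset 𝒮 of committees with 𝒮.card = τ, whose members are pairwise disjoint and each of cardinality k, such that ∑_{S ∈ 𝒮} β S ≥ η (equivalently, by the set-packing correspondence, if and only if there is a consecutive 1-frequency committee series of length τ with committee size k and utilitarian quality at least η). -/

import Mathlib

/-!
The exponents of `p[k*j, j, ℓ]` are exactly the encodings of the unions of `j` pairwise disjoint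
size-`k` committees of total score at least `ℓ` (`mem_support_polyP`, by induction on `j`).
Coefficients are natural numbers, so nothing cancels, and the support of the recursive sum consists
of the sums `chi Y + chi U` with `U` the union of a smaller packing, restricted to Hamming weight
`k*j`. The Hamming weight is subadditive, and `chi Y + chi U` reaches weight `|Y| + |U|` only when
`Y` and `U` are disjoint (`hammingWeight_chi_add_chi_iff`), so the projection keeps precisely the
disjoint extensions. A polynomial is nonzero iff its support is nonempty.
-/

open Polynomial

/-- The characteristic-vector encoding of a set of candidates. -/
def chi {m : ℕ} (Y : Finset (Fin m)) : ℕ := ∑ i ∈ Y, 2 ^ (i : ℕ)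

/-- The Hamming weight of a natural number: the number of ones in its binary
representation. -/
def hammingWeight (e : ℕ) : ℕ := (Nat.digits 2 e).sum

/-- The Hamming projection of a polynomial to `s`: keep exactly the monomials whose
exponent has Hamming weight `s`. -/
noncomputable def hammingProj (s : ℕ) (p : Polynomial ℕ) : Polynomial ℕ :=
  ∑ e ∈ p.support.filter (fun e => hammingWeight e = s), C (p.coeff e) * X ^ e

/-- The representative polynomial: change all nonzero coefficients to `1`. -/
noncomputable def reprPoly (p : Polynomial ℕ) : Polynomial ℕ :=
  ∑ e ∈ p.support, (X : Polynomial ℕ) ^ e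

/-- The recursively defined polynomials `p[s,j,ℓ]` of the polynomial-multiplication
algorithm (utilitarian case), with the number `j` of committees as first argument. -/
noncomputable def polyP (m k : ℕ) (β : Finset (Fin m) → ℕ) :
    ℕ → ℕ → ℕ → Polynomial ℕ
  | 0, _, _ => 0
  | 1, s, ℓ =>
      if s = k then
        ∑ Y ∈ Finset.univ.filter (fun Y : Finset (Fin m) => Y.card = k ∧ ℓ ≤ β Y),
          (X : Polynomial ℕ) ^ chi Y
      else 0
  | (j + 2), s, ℓ =>
      reprPoly (hammingProj s
        (∑ Y ∈ Finset.univ.filter (fun Y : Finset (Fin m) => Y.card = k),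
          (X : Polynomial ℕ) ^ chi Y * polyP m k β (j + 1) (s - k) (ℓ - β Y)))

lemma hammingWeight_eq (n : ℕ) : hammingWeight n = n % 2 + hammingWeight (n / 2) := by
  rcases Nat.eq_zero_or_pos n with rfl | h
  · simp [hammingWeight]
  · unfold hammingWeight
    rw [Nat.digits_def' (by norm_num) h, List.sum_cons]

lemma hammingWeight_one : hammingWeight 1 = 1 := by simp [hammingWeight]

lemma hammingWeight_two_mul (n : ℕ) : hammingWeight (2 * n) = hammingWeight n := by
  rw [hammingWeight_eq]
  simp

lemma hammingWeight_add_le (a b : ℕ) :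
    hammingWeight (a + b) ≤ hammingWeight a + hammingWeight b := by
  induction h : a + b using Nat.strong_induction_on generalizing a b with
  | _ n ih =>
    subst h
    by_cases h0 : a = 0
    · simp [h0]
    by_cases h1 : b = 0
    · simp [h1]
    rw [hammingWeight_eq (a + b), hammingWeight_eq a, hammingWeight_eq b]
    have hs := ih (a / 2 + b / 2) (by omega) (a / 2) (b / 2) rfl
    by_cases hc : a % 2 = 1 ∧ b % 2 = 1
    -- The carry turns the half-sum into a successor; the added `1` costs at most one bit.
    · have e : (a + b) / 2 = a / 2 + b / 2 + 1 := by omega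
      have hs' := ih (a / 2 + b / 2 + 1) (by omega) (a / 2 + b / 2) 1 rfl
      rw [hammingWeight_one] at hs'
      rw [e]
      omega
    · have e : (a + b) / 2 = a / 2 + b / 2 := by omega
      rw [e]
      omega

lemma hammingWeight_two_pow_add (a b : ℕ) (h : b < 2 ^ a) :
    hammingWeight (2 ^ a + b) = 1 + hammingWeight b := by
  induction a generalizing b with
  | zero =>
    obtain rfl : b = 0 := by simpa using h
    simp [hammingWeight]
  | succ a ih =>
    rw [pow_succ] at h ⊢
    rw [hammingWeight_eq, hammingWeight_eq b]
    have e : (2 ^ a * 2 + b) / 2 = 2 ^ a + b / 2 := by omega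
    rw [e, ih _ (by omega)]
    omega

lemma hammingWeight_chi {m : ℕ} (Y : Finset (Fin m)) : hammingWeight (chi Y) = Y.card := by
  induction Y using Finset.induction_on_max with
  | empty => simp [chi, hammingWeight]
  | insert a s hs ih =>
    have ha : a ∉ s := fun h => lt_irrefl _ (hs a h)
    have hlt : chi s < 2 ^ (a : ℕ) := by
      have := Nat.geomSum_lt (m := 2) (n := (a : ℕ)) (s := s.map Fin.valEmbedding) le_rfl
        (by simpa using fun x hx => hs x hx)
      simpa [chi] using this
    have e : chi (insert a s) = 2 ^ (a : ℕ) + chi s := by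
      simp [chi, Finset.sum_insert ha]
    rw [e, hammingWeight_two_pow_add _ _ hlt, ih, Finset.card_insert_of_notMem ha, add_comm]

lemma chi_union {m : ℕ} {Y U : Finset (Fin m)} (h : Disjoint Y U) :
    chi (Y ∪ U) = chi Y + chi U := Finset.sum_union h

/-- No carry occurs in `chi Y + chi U` exactly when the sets are disjoint: a common element
contributes a doubled power of two, which loses a bit. -/
lemma hammingWeight_chi_add_chi_iff {m : ℕ} (Y U : Finset (Fin m)) :
    hammingWeight (chi Y + chi U) = Y.card + U.card ↔ Disjoint Y U := by
  constructor
  · intro h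
    have e : chi Y + chi U = chi ((Y ∪ U) \ (Y ∩ U)) + 2 * chi (Y ∩ U) := by
      have h1 : chi (Y ∪ U) + chi (Y ∩ U) = chi Y + chi U := Finset.sum_union_inter
      have h2 : chi ((Y ∪ U) \ (Y ∩ U)) + chi (Y ∩ U) = chi (Y ∪ U) :=
        Finset.sum_sdiff (Finset.inter_subset_union)
      omega
    have h1 := hammingWeight_add_le (chi ((Y ∪ U) \ (Y ∩ U))) (2 * chi (Y ∩ U))
    rw [← e, h, hammingWeight_two_mul, hammingWeight_chi, hammingWeight_chi] at h1
    have h2 := Finset.card_sdiff_add_card_eq_card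
      (Finset.inter_subset_union : Y ∩ U ⊆ Y ∪ U)
    have h3 := Finset.card_union_add_card_inter Y U
    rw [Finset.disjoint_iff_inter_eq_empty, ← Finset.card_eq_zero]
    omega
  · intro h
    rw [← chi_union h, hammingWeight_chi, Finset.card_union_of_disjoint h]

lemma support_reprPoly (p : Polynomial ℕ) : (reprPoly p).support = p.support := by
  ext e
  simp [reprPoly, Polynomial.finsetSum_coeff, Polynomial.coeff_X_pow]

lemma mem_support_hammingProj (s : ℕ) (p : Polynomial ℕ) (e : ℕ) :
    e ∈ (hammingProj s p).support ↔ e ∈ p.support ∧ hammingWeight e = s := by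
  simp [hammingProj, Polynomial.finsetSum_coeff, Polynomial.coeff_X_pow]
  tauto

/-- Over `ℕ` there is no cancellation, so the support of a sum is the union of supports. -/
lemma mem_support_sum {ι : Type*} (s : Finset ι) (f : ι → Polynomial ℕ) (e : ℕ) :
    e ∈ (∑ i ∈ s, f i).support ↔ ∃ i ∈ s, e ∈ (f i).support := by
  simp [Polynomial.finsetSum_coeff]

lemma mem_support_X_pow_mul (n : ℕ) (p : Polynomial ℕ) (e : ℕ) :
    e ∈ (X ^ n * p).support ↔ ∃ d ∈ p.support, e = n + d := by
  rw [Polynomial.mem_support_iff, Polynomial.coeff_X_pow_mul']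
  constructor
  · intro h
    split_ifs at h with hn
    · exact ⟨e - n, by simpa using h, by omega⟩
    · exact absurd rfl h
  · rintro ⟨d, hd, rfl⟩
    simpa using hd

/-- `IsPacking k j ℓ β 𝒮`: the family `𝒮` consists of `j` pairwise disjoint committees of
size `k` with total score at least `ℓ`. -/
def IsPacking {m : ℕ} (k j ℓ : ℕ) (β : Finset (Fin m) → ℕ)
    (𝒮 : Finset (Finset (Fin m))) : Prop :=
  𝒮.card = j ∧ (∀ S ∈ 𝒮, ∀ T ∈ 𝒮, S ≠ T → S ∩ T = ∅) ∧ (∀ S ∈ 𝒮, S.card = k) ∧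
    ℓ ≤ ∑ S ∈ 𝒮, β S

lemma IsPacking.card_biUnion {m k j ℓ : ℕ} {β : Finset (Fin m) → ℕ}
    {𝒮 : Finset (Finset (Fin m))} (h : IsPacking k j ℓ β 𝒮) :
    (𝒮.biUnion id).card = k * j := by
  obtain ⟨hc, hd, hk, -⟩ := h
  rw [Finset.card_biUnion (t := id) fun S hS T hT hne =>
    Finset.disjoint_iff_inter_eq_empty.2 (hd S hS T hT hne)]
  simp only [id]
  rw [Finset.sum_congr rfl hk, Finset.sum_const, hc, smul_eq_mul, mul_comm]

/-- The invariant of the recursion: the exponents of `p[k*j, j, ℓ]` encode exactly the unions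
of the packings of `j` committees with score at least `ℓ`. -/
lemma mem_support_polyP {m k : ℕ} (hk : 1 ≤ k) (β : Finset (Fin m) → ℕ) (j ℓ e : ℕ) :
    e ∈ (polyP m k β (j + 1) (k * (j + 1)) ℓ).support ↔
      ∃ 𝒮, IsPacking k (j + 1) ℓ β 𝒮 ∧ e = chi (𝒮.biUnion id) := by
  induction j generalizing ℓ e with
  | zero =>
    have hp : polyP m k β (0 + 1) (k * (0 + 1)) ℓ =
        ∑ Y ∈ Finset.univ.filter (fun Y : Finset (Fin m) => Y.card = k ∧ ℓ ≤ β Y),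
          (X : Polynomial ℕ) ^ chi Y := by
      simp [polyP]
    rw [hp, mem_support_sum]
    constructor
    · rintro ⟨Y, hY, he⟩
      have he' : e = chi Y := by simpa [Polynomial.coeff_X_pow] using he
      have hY' : Y.card = k ∧ ℓ ≤ β Y := by simpa using hY
      refine ⟨{Y}, ⟨by simp, ?_, by simpa using hY'.1, by simpa using hY'.2⟩, by simpa using he'⟩
      intro S hS T hT hne
      rw [Finset.mem_singleton] at hS hT
      exact absurd (hS.trans hT.symm) hne
    · rintro ⟨𝒮, ⟨hc, -, hcard, hβ⟩, rfl⟩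
      obtain ⟨Y, rfl⟩ := Finset.card_eq_one.1 hc
      refine ⟨Y, ?_, ?_⟩
      · simpa using And.intro (hcard Y (by simp)) (by simpa using hβ)
      · simp
  | succ j ih =>
    have hs : k * (j + 1 + 1) - k = k * (j + 1) := by
      rw [mul_add k (j + 1) 1, mul_one, Nat.add_sub_cancel]
    rw [polyP, support_reprPoly, mem_support_hammingProj, mem_support_sum]
    simp only [hs, mem_support_X_pow_mul, ih, Finset.mem_filter, Finset.mem_univ, true_and]
    constructor
    · rintro ⟨⟨Y, hY, d, ⟨𝒮, h𝒮, rfl⟩, rfl⟩, hw⟩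
      have hdisj : Disjoint Y (𝒮.biUnion id) := by
        rw [← hammingWeight_chi_add_chi_iff, hw, hY, h𝒮.card_biUnion]
        ring
      have hYS : ∀ S ∈ 𝒮, Y ∩ S = ∅ := fun S hS =>
        Finset.disjoint_iff_inter_eq_empty.1
          (hdisj.mono_right (Finset.subset_biUnion_of_mem id hS))
      -- Distinctness of `Y` from the members of `𝒮` uses that committees are nonempty.
      have hnot : Y ∉ 𝒮 := by
        intro h
        have h0 := hYS Y h
        rw [Finset.inter_self] at h0
        rw [h0, Finset.card_empty] at hY
        omega
      obtain ⟨hc, hd, hcard, hβ⟩ := h𝒮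
      refine ⟨insert Y 𝒮, ⟨?_, ?_, ?_, ?_⟩, ?_⟩
      · rw [Finset.card_insert_of_notMem hnot, hc]
      · intro S hS T hT hne
        rcases Finset.mem_insert.1 hS with hS' | hS' <;>
          rcases Finset.mem_insert.1 hT with hT' | hT'
        · exact absurd (hS'.trans hT'.symm) hne
        · rw [hS']
          exact hYS T hT'
        · rw [hT', Finset.inter_comm]
          exact hYS S hS'
        · exact hd S hS' T hT' hne
      · intro S hS
        rcases Finset.mem_insert.1 hS with rfl | hS
        · exact hY
        · exact hcard S hS
      · rw [Finset.sum_insert hnot]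
        omega
      · rw [Finset.biUnion_insert, id, chi_union hdisj]
    · rintro ⟨𝒮, h𝒮, rfl⟩
      refine ⟨?_, by rw [hammingWeight_chi, h𝒮.card_biUnion]⟩
      obtain ⟨hc, hd, hcard, hβ⟩ := h𝒮
      obtain ⟨Y, hY⟩ : 𝒮.Nonempty := Finset.card_pos.1 (by omega)
      refine ⟨Y, hcard Y hY, _, ⟨𝒮.erase Y, ⟨?_, ?_, ?_, ?_⟩, rfl⟩, ?_⟩
      · rw [Finset.card_erase_of_mem hY, hc]
        rfl
      · exact fun S hS T hT => hd S (Finset.mem_of_mem_erase hS) T (Finset.mem_of_mem_erase hT)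
      · exact fun S hS => hcard S (Finset.mem_of_mem_erase hS)
      · have := Finset.add_sum_erase 𝒮 β hY
        omega
      · have hdisj : Disjoint Y ((𝒮.erase Y).biUnion id) := by
          rw [Finset.disjoint_biUnion_right]
          intro S hS
          exact Finset.disjoint_iff_inter_eq_empty.2
            (hd Y hY S (Finset.mem_of_mem_erase hS) (Finset.ne_of_mem_erase hS).symm)
        rw [← chi_union hdisj]
        conv_lhs => rw [← Finset.insert_erase hY, Finset.biUnion_insert, id]

/-- Main correctness lemma of the polynomial-multiplication algorithm (utilitarian
case): `p[k*τ, τ, η] ≠ 0` iff there are `τ` pairwise disjoint size-`k` committees of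
total score at least `η`. -/
theorem polyP_correct {m k τ η : ℕ} (hm : 1 ≤ m) (hk : 1 ≤ k) (hτ : 1 ≤ τ)
    (β : Finset (Fin m) → ℕ) :
    polyP m k β τ (k * τ) η ≠ 0 ↔
      ∃ 𝒮 : Finset (Finset (Fin m)),
        𝒮.card = τ ∧
        (∀ S ∈ 𝒮, ∀ T ∈ 𝒮, S ≠ T → S ∩ T = ∅) ∧
        (∀ S ∈ 𝒮, S.card = k) ∧
        η ≤ ∑ S ∈ 𝒮, β S := by
  obtain ⟨j, rfl⟩ : ∃ j, τ = j + 1 := ⟨τ - 1, by omega⟩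
  rw [← Polynomial.support_nonempty]
  constructor
  · rintro ⟨e, he⟩
    obtain ⟨𝒮, h𝒮, -⟩ := (mem_support_polyP hk β j η e).1 he
    exact ⟨𝒮, h𝒮⟩
  · rintro ⟨𝒮, h𝒮⟩
    exact ⟨_, (mem_support_polyP hk β j η _).2 ⟨𝒮, h𝒮, rfl⟩⟩
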